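/- Fix positive integers n and ℓ with 2 ≤ ℓ ≤ n, and define F(w) = w·∑_{i=0}^{ℓ−1} C(n−w, i). Then for every integer w with 1 ≤ w, w·ℓ ≥ n, and w + 1 ≤ n − ℓ + 1, one has F(w+1) ≤ F(w). -/

import Mathlib

/-!
Put `m = n - w - 1`, `ℓ = j + 2`, `w = v + 1`. By Pascal's rule
`∑_{i<ℓ} C(m+1, i) = ∑_{i<ℓ} C(m, i) + ∑_{i<ℓ-1} C(m, i)`, so `F(w+1) ≤ F(w)` is equivalent to
`C(m, j+1) ≤ v · ∑_{i<j+1} C(m, i)`. The last term of the sum alone is enough: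
`C(m, j+1) · (j+1) = C(m, j) · (m - j)`, and `n ≤ w ℓ` says exactly `m - j ≤ v (j+1)`.
-/

/-- `F n ℓ w = w·∑_{i=0}^{ℓ−1} C(n−w, i)`. -/
def F (n ℓ w : ℕ) : ℕ := w * ∑ i ∈ Finset.range ℓ, (n - w).choose i

/-- Pascal's rule summed over an initial segment of a row. -/
lemma sum_choose_succ_row (m k : ℕ) :
    ∑ i ∈ Finset.range (k + 1), (m + 1).choose i
      = ∑ i ∈ Finset.range (k + 1), m.choose i + ∑ i ∈ Finset.range k, m.choose i := by
  induction k with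
  | zero => simp
  | succ k ih =>
    rw [Finset.sum_range_succ, ih, Finset.sum_range_succ _ (k + 1),
      Finset.sum_range_succ _ k, Nat.choose_succ_succ]
    ring

lemma choose_succ_le_mul_choose (m j v : ℕ) (h : m ≤ v * (j + 1) + j) :
    m.choose (j + 1) ≤ v * m.choose j := by
  refine Nat.le_of_mul_le_mul_right ?_ (Nat.succ_pos j)
  calc m.choose (j + 1) * (j + 1) = m.choose j * (m - j) := Nat.choose_succ_right_eq m j
    _ ≤ m.choose j * (v * (j + 1)) := Nat.mul_le_mul_left _ (by omega)
    _ = v * m.choose j * (j + 1) := by ring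

/-- For `2 ≤ ℓ ≤ n` and every integer `w` with `1 ≤ w`, `w·ℓ ≥ n`, and `w + 1 ≤ n − ℓ + 1`,
one has `F(w+1) ≤ F(w)`. -/
theorem stmt4 (n ℓ w : ℕ) (hℓ2 : 2 ≤ ℓ) (hℓn : ℓ ≤ n) (hw : 1 ≤ w)
    (hwl : n ≤ w * ℓ) (hw1 : w + 1 ≤ n - ℓ + 1) :
    F n ℓ (w + 1) ≤ F n ℓ w := by
  obtain ⟨j, rfl⟩ := Nat.exists_eq_add_of_le' hℓ2
  obtain ⟨v, rfl⟩ := Nat.exists_eq_add_of_le' hw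
  obtain ⟨m, rfl⟩ : ∃ m, n = m + 1 + (v + 1) := ⟨n - (v + 1) - 1, by omega⟩
  have hc := choose_succ_le_mul_choose m j v (by nlinarith)
  have h1 : m + 1 + (v + 1) - (v + 1 + 1) = m := by omega
  have h2 : m + 1 + (v + 1) - (v + 1) = m + 1 := by omega
  rw [F, F, h1, h2, sum_choose_succ_row m (j + 1), Finset.sum_range_succ _ (j + 1),
    Finset.sum_range_succ _ j]
  generalize ∑ i ∈ Finset.range j, m.choose i = s
  nlinarith [Nat.zero_le (v * s)]
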